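/- The preferred well-founded semantics approximates preferred answer set semantics: let (X,Y) be the preferred well-founded model of an ordered logic program (Π,<) and let Z be any preferred answer set of (Π,<) (i.e., C_{(Π,<)}(Z)=Z). Then X ⊆ Z and Y ⊆ Lit∖Z. -/

import Mathlib

open scoped Classical

/-- A literal: an atom `A` or its classical negation `¬A`. -/
inductive Lit (α : Type) : Type
  | pos : α → Lit α
  | neg : α → Lit α

/-- A rule with a head literal and finite positive and negative bodies. -/
structure Rule (α : Type) where
  head : Lit α
  pbody : Finset (Lit α)
  nbody : Finset (Lit α)

/-- A program is a set of rules (finiteness is stated as a hypothesis). -/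
abbrev Program (α : Type) := Set (Rule α)

/-- `X` is consistent if it contains no complementary pair. -/
def Consistent {α : Type} (X : Set (Lit α)) : Prop :=
  ¬ ∃ A : α, Lit.pos A ∈ X ∧ Lit.neg A ∈ X

/-- `X` is logically closed if it is consistent or equals the set of all literals. -/
def LogClosed {α : Type} (X : Set (Lit α)) : Prop :=
  Consistent X ∨ X = Set.univ

/-- `X` is closed under (basic) program `P`. -/
def ClosedUnder {α : Type} (P : Program α) (X : Set (Lit α)) : Prop :=
  ∀ r ∈ P, ↑r.pbody ⊆ X → r.head ∈ X

/-- `Cn P` : the smallest logically closed set closed under basic program `P`. -/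
def Cn {α : Type} (P : Program α) : Set (Lit α) :=
  ⋂₀ {X | LogClosed X ∧ ClosedUnder P X}

/-- The reduct of `P` relative to `X`. -/
def reduct {α : Type} (P : Program α) (X : Set (Lit α)) : Program α :=
  {s | ∃ r ∈ P, (↑r.nbody ∩ X = (∅ : Set (Lit α))) ∧ s = ⟨r.head, r.pbody, ∅⟩}

/-- A program is basic if all its rules have empty negative body. -/
def IsBasic {α : Type} (P : Program α) : Prop := ∀ r ∈ P, r.nbody = ∅

/-- `C_Π(X) = Cn(Π^X)`. -/
noncomputable def Cop {α : Type} (P : Program α) (X : Set (Lit α)) : Set (Lit α) :=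
  Cn (reduct P X)

/-- `A_Π(X) = C_Π(C_Π(X))`. -/
noncomputable def Aop {α : Type} (P : Program α) (X : Set (Lit α)) : Set (Lit α) :=
  Cop P (Cop P X)

/-- `X` is an answer set of `P` iff `Cn(P^X) = X`. -/
def AnswerSet {α : Type} (P : Program α) (X : Set (Lit α)) : Prop :=
  Cn (reduct P X) = X

/-- Immediate consequence operator for a basic program. -/
noncomputable def T {α : Type} (P : Program α) (X : Set (Lit α)) : Set (Lit α) :=
  if Consistent X then {L | ∃ r ∈ P, ↑r.pbody ⊆ X ∧ L = r.head} else Set.univ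

/-- `r` is active wrt `(X, Y)`. -/
def Active {α : Type} (r : Rule α) (X Y : Set (Lit α)) : Prop :=
  ↑r.pbody ⊆ X ∧ ↑r.nbody ∩ Y = (∅ : Set (Lit α))

/-- Extended immediate consequence operator `T_{Π,Y}(X)`. -/
noncomputable def TE {α : Type} (P : Program α) (Y X : Set (Lit α)) : Set (Lit α) :=
  if Consistent X then {L | ∃ r ∈ P, Active r X Y ∧ L = r.head} else Set.univ

/-- Preference-sensitive operator `T_{(Π,<),Y}(X)` (Definition 1). -/
noncomputable def TP {α : Type} (P : Program α) (lt : Rule α → Rule α → Prop)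
    (Y X : Set (Lit α)) : Set (Lit α) :=
  if Consistent X then
    {L | ∃ r ∈ P, Active r X Y ∧
      (¬ ∃ r' ∈ P, lt r r' ∧ Active r' Y X ∧ r'.head ∉ X) ∧ L = r.head}
  else Set.univ

/-- `C_{(Π,<)}(X)` (Definition 2). -/
noncomputable def CP {α : Type} (P : Program α) (lt : Rule α → Rule α → Prop)
    (X : Set (Lit α)) : Set (Lit α) :=
  ⋃ i : ℕ, (TP P lt X)^[i] ∅

/-- `A_{(Π,<)}(X) = C_{(Π,<)}(C_{(Π,<)}(X))`. -/
noncomputable def AP {α : Type} (P : Program α) (lt : Rule α → Rule α → Prop)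
    (X : Set (Lit α)) : Set (Lit α) :=
  CP P lt (CP P lt X)

/-- The set `D^r_{(X,Y)}` of removable literals. -/
def D {α : Type} (P : Program α) (lt : Rule α → Rule α → Prop) (r : Rule α)
    (X Y : Set (Lit α)) : Set (Lit α) :=
  {L | ∀ r' ∈ P, r'.head = L → ↑r'.pbody ⊆ Y →
      lt r' r ∧ ({r.head} ∪ X) ∩ ↑r'.nbody ≠ (∅ : Set (Lit α))}

/-- `T°_{(Π,<),Y}(X)` (Definition 3). -/
noncomputable def TN {α : Type} (P : Program α) (lt : Rule α → Rule α → Prop)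
    (Y X : Set (Lit α)) : Set (Lit α) :=
  if Consistent X then
    {L | ∃ r ∈ P, Active r X (Y \ D P lt r X Y) ∧ L = r.head}
  else Set.univ

/-- `C°_{(Π,<)}(X)` (Definition 4). -/
noncomputable def CN {α : Type} (P : Program α) (lt : Rule α → Rule α → Prop)
    (X : Set (Lit α)) : Set (Lit α) :=
  ⋃ i : ℕ, (TN P lt X)^[i] ∅

/-- `A°_{(Π,<)}(X) = C°_{(Π,<)}(C_Π(X))`. -/
noncomputable def AN {α : Type} (P : Program α) (lt : Rule α → Rule α → Prop)
    (X : Set (Lit α)) : Set (Lit α) :=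
  CN P lt (Cop P X)

/-!
Monotonicity of `A°` reduces the claim to `A°(Z) ⊆ Z`. If `Z` is a preferred answer set, then it is
an answer set: by induction along `>`, the head of a rule active wrt `(Z, Z)` enters `C_{(Π,<)}(Z)`
once each of the finitely many rules preferred to it has been applied or defeated. So
`A°(Z) = C°(Z)`.

For `C°(Z) ⊆ Z`, let `r` be used by `C°`. If `r` is not active wrt `(Z, Z)`, consider the first
stage of `C_{(Π,<)}(Z)` meeting its negative body, in a literal `L`. Since `L` is removable, the
rule `r'` that produced `L` satisfies `r' < r`; as `r` was not yet defeated at that stage, it would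
have blocked `r'`, unless its head had been derived before.
-/

theorem iUnion_iterate_empty_subset {β : Type*} {f : Set β → Set β} {W : Set β}
    (hf : ∀ X ⊆ W, f X ⊆ W) : ⋃ i : ℕ, f^[i] ∅ ⊆ W :=
  have hmaps : Set.MapsTo f (Set.Iic W) (Set.Iic W) := hf
  Set.iUnion_subset fun i => hmaps.iterate i (Set.empty_subset W)

section

variable {α : Type} {P : Program α} {lt : Rule α → Rule α → Prop} {r : Rule α} {L : Lit α}
  {X X' Y Y' Z : Set (Lit α)}

theorem Consistent.subset (hY : Consistent Y) (h : X ⊆ Y) : Consistent X :=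
  fun ⟨A, hpos, hneg⟩ => hY ⟨A, h hpos, h hneg⟩

theorem Active.mono (h : Active r X Y) (hX : X ⊆ X') (hY : Y' ⊆ Y) : Active r X' Y' :=
  ⟨h.1.trans hX, Set.subset_eq_empty (Set.inter_subset_inter_right _ hY) h.2⟩

theorem closedUnder_reduct_iff :
    ClosedUnder (reduct P Y) X ↔ ∀ r ∈ P, Active r X Y → r.head ∈ X := by
  constructor
  · exact fun h r hr hact => h ⟨r.head, r.pbody, ∅⟩ ⟨r, hr, hact.2, rfl⟩ hact.1
  · rintro h _ ⟨r, hr, hn, rfl⟩ hp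
    exact h r hr ⟨hp, hn⟩

theorem Cop_subset (hlog : LogClosed X) (hcl : ClosedUnder (reduct P Y) X) : Cop P Y ⊆ X :=
  Set.sInter_subset_of_mem ⟨hlog, hcl⟩

theorem Cop_antitone : Antitone (Cop P) := by
  intro X Y hXY
  refine Set.subset_sInter fun W ⟨hlog, hcl⟩ => Cop_subset hlog ?_
  rw [closedUnder_reduct_iff] at hcl ⊢
  exact fun r hr hact => hcl r hr (hact.mono subset_rfl hXY)

theorem mem_TP_iff (hX : Consistent X) :
    L ∈ TP P lt Y X ↔ ∃ r ∈ P, Active r X Y ∧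
      (∀ s ∈ P, lt r s → Active s Y X → s.head ∈ X) ∧ L = r.head := by
  simp only [TP, if_pos hX, Set.mem_ofPred_eq, not_exists, not_and, not_not]

theorem TP_eq_univ (hX : ¬ Consistent X) : TP P lt Y X = Set.univ :=
  if_neg hX

theorem head_mem_TP (hr : r ∈ P) (hact : Active r X Y)
    (hunblocked : ∀ s ∈ P, lt r s → Active s Y X → s.head ∈ X) : r.head ∈ TP P lt Y X := by
  by_cases hX : Consistent X
  · exact (mem_TP_iff hX).2 ⟨r, hr, hact, hunblocked, rfl⟩
  · exact TP_eq_univ hX ▸ Set.mem_univ _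

theorem TP_monotone : Monotone (TP P lt Y) := by
  intro X X' hX L hL
  by_cases hc : Consistent X'
  · obtain ⟨r, hr, hact, hunblocked, rfl⟩ := (mem_TP_iff (hc.subset hX)).1 hL
    exact head_mem_TP hr (hact.mono hX subset_rfl) fun s hs hrs hsact =>
      hX (hunblocked s hs hrs (hsact.mono subset_rfl hX))
  · exact TP_eq_univ hc ▸ Set.mem_univ L

theorem TP_subset (hlog : LogClosed Z) (hcl : ClosedUnder (reduct P Y) Z) (hX : X ⊆ Z) :
    TP P lt Y X ⊆ Z := by
  rcases hlog with hc | rfl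
  · intro L hL
    obtain ⟨r, hr, hact, -, rfl⟩ := (mem_TP_iff (hc.subset hX)).1 hL
    exact closedUnder_reduct_iff.1 hcl r hr (hact.mono hX subset_rfl)
  · exact Set.subset_univ _

/-- The `i`-th stage `T^i_{(Π,<),Y}(∅)` of the iteration whose union is `C_{(Π,<)}(Y)`. -/
noncomputable def stage (P : Program α) (lt : Rule α → Rule α → Prop) (Y : Set (Lit α)) (i : ℕ) :
    Set (Lit α) :=
  (TP P lt Y)^[i] ∅

theorem stage_succ (i : ℕ) : stage P lt Y (i + 1) = TP P lt Y (stage P lt Y i) :=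
  Function.iterate_succ_apply' _ _ _

theorem stage_monotone : Monotone (stage P lt Y) :=
  TP_monotone.monotone_iterate_of_le_map (Set.empty_subset _)

theorem stage_subset_CP (i : ℕ) : stage P lt Y i ⊆ CP P lt Y :=
  Set.subset_iUnion (stage P lt Y) i

theorem eventually_mem_stage (hL : L ∈ CP P lt Y) :
    ∀ᶠ i in Filter.atTop, L ∈ stage P lt Y i := by
  obtain ⟨i, hi⟩ := Set.mem_iUnion.1 hL
  filter_upwards [Filter.eventually_ge_atTop i] with j hij using stage_monotone hij hi

theorem eventually_subset_stage {S : Finset (Lit α)} (hS : ↑S ⊆ CP P lt Y) :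
    ∀ᶠ i in Filter.atTop, ↑S ⊆ stage P lt Y i :=
  (Filter.eventually_all_finset S).2 fun _ hL => eventually_mem_stage (hS hL)

theorem eventually_not_active_stage (hZ : Z ⊆ CP P lt Z) (h : ¬ Active r Z Z) :
    ∀ᶠ i in Filter.atTop, ¬ Active r Z (stage P lt Z i) := by
  by_cases hp : ↑r.pbody ⊆ Z
  · obtain ⟨L, hLn, hLZ⟩ := Set.nonempty_iff_ne_empty.2 fun hn => h ⟨hp, hn⟩
    filter_upwards [eventually_mem_stage (hZ hLZ)] with i hi hact
    exact hact.2.subset ⟨hLn, hi⟩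
  · exact Filter.Eventually.of_forall fun _ hact => hp hact.1

theorem logClosed_CP : LogClosed (CP P lt Y) := by
  refine or_iff_not_imp_left.2 fun hc => ?_
  obtain ⟨A, hpos, hneg⟩ := not_not.1 hc
  obtain ⟨i, hi_pos, hi_neg⟩ := ((eventually_mem_stage hpos).and (eventually_mem_stage hneg)).exists
  have hstage : stage P lt Y (i + 1) = Set.univ :=
    (stage_succ i).trans (TP_eq_univ fun h => h ⟨A, hi_pos, hi_neg⟩)
  exact Set.univ_subset_iff.1 (hstage ▸ stage_subset_CP (i + 1))

theorem CP_subset_Cop : CP P lt Y ⊆ Cop P Y :=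
  Set.subset_sInter fun _ ⟨hlog, hcl⟩ =>
    iUnion_iterate_empty_subset fun _ hX => TP_subset hlog hcl hX

theorem closedUnder_reduct_CP (hwf : P.WellFoundedOn (Function.swap lt))
    (hup : ∀ r ∈ P, {s ∈ P | lt r s}.Finite) (hZ : Z ⊆ CP P lt Z) :
    ClosedUnder (reduct P Z) (CP P lt Z) := by
  rw [closedUnder_reduct_iff]
  intro r hr
  refine hwf.induction (P := fun r => Active r (CP P lt Z) Z → r.head ∈ CP P lt Z) hr ?_
  intro r hr ih hact
  have hunblocked : ∀ᶠ i in Filter.atTop, ∀ s ∈ {s ∈ P | lt r s},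
      Active s Z (stage P lt Z i) → s.head ∈ stage P lt Z i := by
    refine (Filter.eventually_all_finite (hup r hr)).2 fun s ⟨hs, hrs⟩ => ?_
    by_cases hsact : Active s Z Z
    · have hhead : s.head ∈ CP P lt Z := ih s hs hrs (hsact.mono hZ subset_rfl)
      exact (eventually_mem_stage hhead).mono fun _ hi _ => hi
    · exact (eventually_not_active_stage hZ hsact).mono fun _ hi hact => absurd hact hi
  obtain ⟨i, hi_body, hi_unblocked⟩ := ((eventually_subset_stage hact.1).and hunblocked).exists
  apply stage_subset_CP (i + 1)
  rw [stage_succ]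
  exact head_mem_TP hr ⟨hi_body, hact.2⟩ fun s hs hrs => hi_unblocked s ⟨hs, hrs⟩

theorem answerSet_of_CP_eq (hwf : P.WellFoundedOn (Function.swap lt))
    (hup : ∀ r ∈ P, {s ∈ P | lt r s}.Finite) (hZ : CP P lt Z = Z) : AnswerSet P Z :=
  calc
    Cop P Z = CP P lt Z :=
      (Cop_subset logClosed_CP (closedUnder_reduct_CP hwf hup hZ.ge)).antisymm CP_subset_Cop
    _ = Z := hZ

theorem D_subset_D (hX : X ⊆ X') (hY : Y' ⊆ Y) : D P lt r X Y ⊆ D P lt r X' Y' := by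
  intro L hL s hs hhead hbody
  obtain ⟨hlt, hne⟩ := hL s hs hhead (hbody.trans hY)
  refine ⟨hlt, fun hempty => hne (Set.subset_eq_empty ?_ hempty)⟩
  exact Set.inter_subset_inter_left _ (Set.union_subset_union_right _ hX)

theorem mem_TN_iff (hX : Consistent X) :
    L ∈ TN P lt Y X ↔ ∃ r ∈ P, Active r X (Y \ D P lt r X Y) ∧ L = r.head := by
  simp only [TN, if_pos hX, Set.mem_ofPred_eq]

theorem TN_subset_TN (hX : X ⊆ X') (hY : Y' ⊆ Y) : TN P lt Y X ⊆ TN P lt Y' X' := by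
  intro L hL
  by_cases hc : Consistent X'
  · obtain ⟨r, hr, hact, rfl⟩ := (mem_TN_iff (hc.subset hX)).1 hL
    have hdiff : Y' \ D P lt r X' Y' ⊆ Y \ D P lt r X Y :=
      Set.sdiff_subset_sdiff hY (D_subset_D hX hY)
    exact (mem_TN_iff hc).2 ⟨r, hr, hact.mono hX hdiff, rfl⟩
  · rw [TN, if_neg hc]
    exact Set.mem_univ L

theorem CN_antitone : Antitone (CN P lt) := by
  intro Y' Y hY
  refine Set.iUnion_mono fun i => ?_
  induction i with
  | zero => exact subset_rfl
  | succ i ih =>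
    rw [Function.iterate_succ_apply', Function.iterate_succ_apply']
    exact TN_subset_TN ih hY

theorem AN_monotone : Monotone (AN P lt) :=
  CN_antitone.comp Cop_antitone

theorem exists_first_stage_inter_nonempty {S : Set (Lit α)} (h : (S ∩ CP P lt Y).Nonempty) :
    ∃ i, S ∩ stage P lt Y i = ∅ ∧ (S ∩ stage P lt Y (i + 1)).Nonempty := by
  have hzero : ¬ (S ∩ stage P lt Y 0).Nonempty := fun ⟨_, _, hL⟩ => hL
  have hexists : ∃ i, (S ∩ stage P lt Y i).Nonempty := by
    obtain ⟨L, hLS, hL⟩ := h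
    obtain ⟨i, hi⟩ := Set.mem_iUnion.1 hL
    exact ⟨i, L, hLS, hi⟩
  simpa only [Set.not_nonempty_iff_eq_empty] using
    Nat.exists_not_and_succ_of_not_zero_of_exists hzero hexists

theorem head_mem_of_nbody_inter_nonempty (hZ : CP P lt Z = Z) (hc : Consistent Z) (hr : r ∈ P)
    (hact : Active r Z (Z \ D P lt r X Z)) (hn : (↑r.nbody ∩ Z).Nonempty) : r.head ∈ Z := by
  have hstage (i : ℕ) : stage P lt Z i ⊆ Z := (stage_subset_CP i).trans hZ.subset
  obtain ⟨i, hi, L, hLn, hL⟩ := exists_first_stage_inter_nonempty (hZ.symm ▸ hn)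
  have hLD : L ∈ D P lt r X Z := by
    by_contra hLD
    exact hact.2.subset ⟨hLn, hstage _ hL, hLD⟩
  rw [stage_succ, mem_TP_iff (hc.subset (hstage i))] at hL
  obtain ⟨r', hr', hact', hunblocked, hhead⟩ := hL
  have hlt : lt r' r := (hLD r' hr' hhead.symm (hact'.1.trans (hstage i))).1
  exact hstage i (hunblocked r hr hlt ⟨hact.1, hi⟩)

theorem CN_subset (hZ : CP P lt Z = Z) (hcl : ClosedUnder (reduct P Z) Z) : CN P lt Z ⊆ Z := by
  have hlog : LogClosed Z := hZ ▸ logClosed_CP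
  rcases hlog with hc | hZ_univ
  · refine iUnion_iterate_empty_subset fun X hX L hL => ?_
    obtain ⟨r, hr, hact, rfl⟩ := (mem_TN_iff (hc.subset hX)).1 hL
    have hactZ := hact.mono hX subset_rfl
    rcases Set.eq_empty_or_nonempty (↑r.nbody ∩ Z) with hn | hn
    · exact closedUnder_reduct_iff.1 hcl r hr ⟨hactZ.1, hn⟩
    · exact head_mem_of_nbody_inter_nonempty hZ hc hr hactZ hn
  · exact (Set.subset_univ _).trans hZ_univ.ge

theorem AN_subset (hwf : P.WellFoundedOn (Function.swap lt))
    (hup : ∀ r ∈ P, {s ∈ P | lt r s}.Finite) (hZ : CP P lt Z = Z) : AN P lt Z ⊆ Z := by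
  have hCop : Cop P Z = Z := answerSet_of_CP_eq hwf hup hZ
  have hcl : ClosedUnder (reduct P Z) Z := by
    simpa only [hZ] using closedUnder_reduct_CP hwf hup hZ.ge
  rw [AN, hCop]
  exact CN_subset hZ hcl

end

theorem preferred_wfm_approximates_preferredAnswerSets_general {α : Type}
    (P : Program α) (lt : Rule α → Rule α → Prop)
    (hwf : P.WellFoundedOn (Function.swap lt)) (hup : ∀ r ∈ P, {s ∈ P | lt r s}.Finite)
    (X : Set (Lit α)) (hX : IsLeast (Function.fixedPoints (AN P lt)) X)
    (Z : Set (Lit α)) (hZ : CP P lt Z = Z) :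
    X ⊆ Z ∧ (Set.univ \ Cop P X) ⊆ (Set.univ \ Z) := by
  let A : Set (Lit α) →o Set (Lit α) := ⟨AN P lt, AN_monotone⟩
  have hXZ : X ⊆ Z := by
    rw [hX.unique A.isLeast_lfp]
    exact A.lfp_le (AN_subset hwf hup hZ)
  refine ⟨hXZ, Set.sdiff_subset_sdiff_right ?_⟩
  calc
    Z = Cop P Z := (answerSet_of_CP_eq hwf hup hZ).symm
    _ ⊆ Cop P X := Cop_antitone hXZ

/-- Theorem 4: the preferred well-founded model `(X,Y)`
approximates every preferred answer set `Z`: `X ⊆ Z` and `Y ⊆ Lit ∖ Z`. -/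
theorem preferred_wfm_approximates_preferredAnswerSets {α : Type}
    (P : Program α) (hfin : P.Finite) (lt : Rule α → Rule α → Prop)
    (hirr : ∀ r, ¬ lt r r) (htrans : ∀ r₁ r₂ r₃, lt r₁ r₂ → lt r₂ r₃ → lt r₁ r₃)
    (X : Set (Lit α))
    (hX : AN P lt X = X ∧ ∀ Z, AN P lt Z = Z → X ⊆ Z)
    (Z : Set (Lit α)) (hZ : CP P lt Z = Z) :
    X ⊆ Z ∧ (Set.univ \ Cop P X) ⊆ (Set.univ \ Z) := by
  have : IsStrictOrder (Rule α) (Function.swap lt) :=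
    { irrefl := hirr, trans := fun _ _ _ h h' => htrans _ _ _ h' h }
  exact preferred_wfm_approximates_preferredAnswerSets_general P lt hfin.wellFoundedOn
    (fun _ _ => hfin.sep _) X hX Z hZ
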